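/- Every sequence generated by the inexact augmented Lagrangian method is a valid sequence of the inexact proximal point algorithm on the negative dual function: if (x^{k+1}, y^{k+1}, s^{k+1}, λ^{k+1})_{k∈ℕ} is an IALM sequence for the constrained problem with penalty parameters (γ_k) and errors (ε_k), then for every k, ‖λ^{k+1} − prox_{γ_k h}(λ^k)‖ ≤ ε_{k+1}, where prox_{γ h}(λ) is the unique minimizer of μ ↦ h(μ) + ‖λ − μ‖²/(2γ) and h is the negative dual function; moreover s^{k+1} = (λ^k − λ^{k+1})/γ_k. -/

import Mathlib

open scoped RealInnerProductSpace
open Filter Asymptotics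

noncomputable section

/-- The negative dual function `h(l) = sup_{(x,s) ∈ 𝒞} (⟪l, s⟫ − f x)`. -/
def negDual {E Y : Type*} [NormedAddCommGroup Y] [InnerProductSpace ℝ Y]
    (f : E → EReal) (CC : Set (E × Y)) (l : Y) : EReal :=
  ⨆ (p : E × Y) (_ : p ∈ CC), ((⟪l, p.2⟫ : ℝ) : EReal) - f p.1

/-- The value function of the shifted problem: `ν(s̃) = inf { f x | (x, s̃) ∈ 𝒞 }`. -/
def valueFn {E Y : Type*} (f : E → EReal) (CC : Set (E × Y)) (st : Y) : EReal :=
  ⨅ (x : E) (_ : (x, st) ∈ CC), f x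

/-!
Up to the error `ε`, the method computes a proximal step by convex duality. Writing `h` for the
negative dual function and `l⁺ = l - γ s`, completing the square gives, for all `(x, s) ∈ 𝒞` and
all `q`,
`‖l⁺ - q‖² / (2γ) = L_γ(x, s, l) + (⟪q, s⟫ - f x) + ‖l - q‖² / (2γ)
  ≤ L_γ(x, s, l) + (h q + ‖l - q‖² / (2γ))`.
If `q` minimizes `h + ‖l - ·‖² / (2γ)`, then the last bracket is at most `-inf L_γ(·, ·, l)`, by
strong duality, and the right-hand side is at most `ε² / (2γ)`. For strong duality, Hahn–Banach
inserts an affine function `⟪μ, ·⟫ + β` between the convex value function and the concave quadratic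
`s ↦ inf L_γ + ⟪l, s⟫ - γ/2 ‖s‖²` below it; this `μ` attains the bound.
-/

section Separation

variable {Y : Type*} [AddCommGroup Y] [Module ℝ Y] [TopologicalSpace Y] [IsTopologicalAddGroup Y]
  [ContinuousSMul ℝ Y]

theorem exists_continuousAffine_between {φ : Y → ℝ} (hφ : ConcaveOn ℝ Set.univ φ)
    (hφc : Continuous φ) {A : Set (Y × ℝ)} (hA : Convex ℝ A) (hAne : A.Nonempty)
    (hle : ∀ a ∈ A, φ a.1 ≤ a.2) :
    ∃ (L : Y →L[ℝ] ℝ) (β : ℝ), (∀ s, φ s ≤ L s + β) ∧ ∀ a ∈ A, L a.1 + β ≤ a.2 := by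
  have hopen : IsOpen {p : Y × ℝ | p.1 ∈ Set.univ ∧ p.2 < φ p.1} := by
    simpa using isOpen_lt continuous_snd (hφc.comp continuous_fst)
  have hdisj : Disjoint {p : Y × ℝ | p.1 ∈ Set.univ ∧ p.2 < φ p.1} A :=
    Set.disjoint_left.2 fun p hp hpA => hp.2.not_ge (hle p hpA)
  obtain ⟨F, u, hbelow, habove⟩ :=
    geometric_hahn_banach_open hφ.convex_strict_hypograph hopen hA hdisj
  have hF (s : Y) (r : ℝ) : F (s, r) = F (s, 0) + r * F (0, 1) := by
    rw [← smul_eq_mul, ← map_smul, ← map_add]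
    simp
  -- A point of `A` lies strictly above a point of the hypograph, so `F` is not vertical.
  have hslope : 0 < F (0, 1) := by
    obtain ⟨⟨s, r⟩, hsr⟩ := hAne
    have hlt := (hbelow (s, φ s - 1) ⟨Set.mem_univ s, sub_one_lt _⟩).trans_le (habove _ hsr)
    have := hle _ hsr
    rw [hF s r, hF s (φ s - 1)] at hlt
    exact pos_of_mul_pos_right (by linarith : 0 < (r - (φ s - 1)) * F (0, 1)) (by linarith)
  refine ⟨-(F (0, 1))⁻¹ • F.comp (.inl ℝ Y ℝ), u / F (0, 1), ?_⟩
  have haffine (s : Y) : (-(F (0, 1))⁻¹ • F.comp (.inl ℝ Y ℝ)) s + u / F (0, 1)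
      = (u - F (s, 0)) / F (0, 1) := by
    simp only [smul_apply, ContinuousLinearMap.comp_apply,
      ContinuousLinearMap.inl_apply, smul_eq_mul]
    ring
  simp only [haffine]
  refine ⟨fun s => le_of_forall_lt fun t ht => ?_, fun ⟨s, r⟩ hsr => ?_⟩
  · have hlt := hbelow (s, t) ⟨Set.mem_univ s, ht⟩
    rw [hF] at hlt
    rw [lt_div_iff₀ hslope]
    linarith
  · have hge := habove _ hsr
    rw [hF] at hge
    rw [div_le_iff₀ hslope]
    linarith

end Separation

section QuadraticPenalty

variable {Y : Type*} [NormedAddCommGroup Y] [InnerProductSpace ℝ Y]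

theorem concaveOn_inner_sub_mul_norm_sq (l : Y) {g : ℝ} (hg : 0 ≤ g) :
    ConcaveOn ℝ Set.univ fun s : Y => ⟪l, s⟫ - g / 2 * ‖s‖ ^ 2 := by
  have hsq : ConvexOn ℝ Set.univ fun s : Y => ‖s‖ ^ 2 :=
    convexOn_univ_norm.pow (fun _ _ => norm_nonneg _) 2
  exact ((innerₗ Y l).concaveOn convex_univ).sub (hsq.smul (by positivity : 0 ≤ g / 2))

theorem norm_sub_smul_sub_sq_div (l q s : Y) {g : ℝ} (hg : g ≠ 0) :
    ‖l - g • s - q‖ ^ 2 / (2 * g)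
      = ‖l - q‖ ^ 2 / (2 * g) - ⟪l, s⟫ + ⟪q, s⟫ + g / 2 * ‖s‖ ^ 2 := by
  rw [sub_right_comm, norm_sub_sq_real, real_inner_smul_right, norm_smul, mul_pow,
    Real.norm_eq_abs, sq_abs, inner_sub_left]
  field_simp
  ring

theorem exists_inner_sub_add_norm_sq_le_neg [CompleteSpace Y] {A : Set (Y × ℝ)}
    (hA : Convex ℝ A) (hAne : A.Nonempty) {l : Y} {g : ℝ} (hg : 0 < g) {m : ℝ}
    (hm : ∀ a ∈ A, m ≤ a.2 - ⟪l, a.1⟫ + g / 2 * ‖a.1‖ ^ 2) :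
    ∃ μ : Y, ∀ a ∈ A, ⟪μ, a.1⟫ - a.2 + ‖l - μ‖ ^ 2 / (2 * g) ≤ -m := by
  obtain ⟨L, β, hbelow, habove⟩ := exists_continuousAffine_between
    ((concaveOn_inner_sub_mul_norm_sq l hg.le).add_const m) (by fun_prop) hA hAne
    fun a ha => by simp only [Pi.add_apply]; linarith [hm a ha]
  obtain ⟨μ, rfl⟩ := (InnerProductSpace.toDual ℝ Y).surjective L
  simp only [InnerProductSpace.toDual_apply_apply, Pi.add_apply] at hbelow habove
  -- `g⁻¹ • (l - μ)` maximizes `s ↦ ⟪l - μ, s⟫ - g / 2 * ‖s‖ ^ 2`.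
  have hβ : m + ‖l - μ‖ ^ 2 / (2 * g) ≤ β := by
    have hsq := norm_sub_smul_sub_sq_div l μ (g⁻¹ • (l - μ)) hg.ne'
    rw [smul_inv_smul₀ hg.ne', sub_sub_cancel, sub_self, norm_zero, zero_pow two_ne_zero,
      zero_div] at hsq
    linarith [hbelow (g⁻¹ • (l - μ))]
  exact ⟨μ, fun a ha => by linarith [habove a ha]⟩

end QuadraticPenalty

/-- The projection to `Y × ℝ` of the epigraph of `f` over `CC`. It stands in for the epigraph of
`valueFn f CC`: it lies between the strict epigraph and the epigraph, and its points come with a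
feasible `x`. -/
def valueEpigraph {E Y : Type*} (f : E → EReal) (CC : Set (E × Y)) : Set (Y × ℝ) :=
  {a | ∃ x, (x, a.1) ∈ CC ∧ f x ≤ a.2}

theorem convex_valueEpigraph {E Y : Type*} [AddCommGroup E] [Module ℝ E] [AddCommGroup Y]
    [Module ℝ Y] {f : E → EReal} {CC : Set (E × Y)}
    (hf : ∀ x y : E, ∀ a b : ℝ, 0 ≤ a → 0 ≤ b → a + b = 1 →
      f (a • x + b • y) ≤ (a : EReal) * f x + (b : EReal) * f y)
    (hCC : Convex ℝ CC) : Convex ℝ (valueEpigraph f CC) := by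
  rintro ⟨s₁, r₁⟩ ⟨x₁, hx₁, hr₁⟩ ⟨s₂, r₂⟩ ⟨x₂, hx₂, hr₂⟩ a b ha hb hab
  refine ⟨a • x₁ + b • x₂, hCC hx₁ hx₂ ha hb hab, ?_⟩
  calc f (a • x₁ + b • x₂) ≤ a * f x₁ + b * f x₂ := hf x₁ x₂ a b ha hb hab
    _ ≤ a * r₁ + b * r₂ := add_le_add
        (mul_le_mul_of_nonneg_left hr₁ (EReal.coe_nonneg.2 ha))
        (mul_le_mul_of_nonneg_left hr₂ (EReal.coe_nonneg.2 hb))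
    _ = ((a • r₁ + b • r₂ : ℝ) : EReal) := by simp

section AugmentedLagrangian

variable {E Y : Type*} [NormedAddCommGroup Y] [InnerProductSpace ℝ Y]

/-- The augmented Lagrangian `L_g(x, s, l) = f x - ⟪l, s⟫ + g / 2 * ‖s‖ ^ 2` at `p = (x, s)`. The
constraint `p ∈ 𝒞` is imposed separately. -/
def augLagrangian (f : E → EReal) (g : ℝ) (l : Y) (p : E × Y) : EReal :=
  f p.1 - ((⟪l, p.2⟫ : ℝ) : EReal) + ((g / 2 * ‖p.2‖ ^ 2 : ℝ) : EReal)

/-- The function `μ ↦ h μ + ‖l - μ‖ ^ 2 / (2 * g)` whose minimizer is `prox_{g h}(l)`, for the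
negative dual function `h`. -/
def proxObjective (f : E → EReal) (CC : Set (E × Y)) (g : ℝ) (l μ : Y) : EReal :=
  negDual f CC μ + ((‖l - μ‖ ^ 2 / (2 * g) : ℝ) : EReal)

variable {f : E → EReal} {CC : Set (E × Y)} {g : ℝ} {l : Y} {p : E × Y}

theorem augLagrangian_eq_top_iff : augLagrangian f g l p = ⊤ ↔ f p.1 = ⊤ := by
  unfold augLagrangian
  induction f p.1 <;> simp [← EReal.coe_sub, ← EReal.coe_add, -EReal.coe_mul, -EReal.coe_pow]

theorem augLagrangian_eq_bot_iff : augLagrangian f g l p = ⊥ ↔ f p.1 = ⊥ := by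
  unfold augLagrangian
  induction f p.1 <;> simp [← EReal.coe_sub, ← EReal.coe_add, -EReal.coe_mul, -EReal.coe_pow]

theorem exists_proxObjective_le_neg [CompleteSpace Y] (hconv : Convex ℝ (valueEpigraph f CC))
    (hne : (valueEpigraph f CC).Nonempty) (hg : 0 < g) {m : ℝ}
    (hm : ∀ p ∈ CC, (m : EReal) ≤ augLagrangian f g l p) :
    ∃ μ : Y, proxObjective f CC g l μ ≤ ((-m : ℝ) : EReal) := by
  have hm' : ∀ a ∈ valueEpigraph f CC, m ≤ a.2 - ⟪l, a.1⟫ + g / 2 * ‖a.1‖ ^ 2 := by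
    rintro ⟨s, r⟩ ⟨x, hx, hr⟩
    have : (m : EReal) ≤ ((r - ⟪l, s⟫ + g / 2 * ‖s‖ ^ 2 : ℝ) : EReal) := by
      push_cast
      exact (hm _ hx).trans (add_le_add_left (EReal.sub_le_sub hr le_rfl) _)
    exact_mod_cast this
  obtain ⟨μ, hμ⟩ := exists_inner_sub_add_norm_sq_le_neg hconv hne hg hm'
  have hdual : negDual f CC μ ≤ ((-m - ‖l - μ‖ ^ 2 / (2 * g) : ℝ) : EReal) := by
    refine iSup₂_le fun p hp => ?_
    by_cases htop : f p.1 = ⊤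
    · simp [htop]
    · have hbot : f p.1 ≠ ⊥ := fun h =>
        EReal.coe_ne_bot m (le_bot_iff.1 ((hm p hp).trans_eq (augLagrangian_eq_bot_iff.2 h)))
      lift f p.1 to ℝ using ⟨htop, hbot⟩ with r hr
      have := hμ (p.2, r) ⟨p.1, hp, hr.ge⟩
      exact_mod_cast (by linarith : ⟪μ, p.2⟫ - r ≤ _)
  refine ⟨μ, (add_le_add_left hdual _).trans_eq ?_⟩
  norm_cast
  ring

theorem norm_sq_div_sub_augLagrangian_le_proxObjective (hp : p ∈ CC) (hg : g ≠ 0) (q : Y) :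
    ((‖l - g • p.2 - q‖ ^ 2 / (2 * g) : ℝ) : EReal) - augLagrangian f g l p
      ≤ proxObjective f CC g l q := by
  have hdual : ((⟪q, p.2⟫ : ℝ) : EReal) - f p.1 ≤ negDual f CC q :=
    le_iSup₂ (f := fun (p : E × Y) (_ : p ∈ CC) => ((⟪q, p.2⟫ : ℝ) : EReal) - f p.1) p hp
  refine le_trans (le_of_eq ?_) (add_le_add_left hdual _)
  rw [norm_sub_smul_sub_sq_div l q p.2 hg]
  unfold augLagrangian
  induction f p.1 with
  | bot => simp [-EReal.coe_sub, -EReal.coe_add, -EReal.coe_mul, -EReal.coe_pow]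
  | top => simp [-EReal.coe_sub, -EReal.coe_add, -EReal.coe_mul, -EReal.coe_pow]
  | coe r => norm_cast; ring

theorem norm_sub_smul_sub_le_of_forall_proxObjective_le [CompleteSpace Y]
    (hconv : Convex ℝ (valueEpigraph f CC)) (hg : 0 < g) {m : ℝ}
    (hm : ∀ p' ∈ CC, (m : EReal) ≤ augLagrangian f g l p') {e : ℝ} (he : 0 ≤ e) (hp : p ∈ CC)
    (hopt : augLagrangian f g l p ≤ ((m + e ^ 2 / (2 * g) : ℝ) : EReal)) {q : Y}
    (hq : ∀ μ, proxObjective f CC g l q ≤ proxObjective f CC g l μ) :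
    ‖l - g • p.2 - q‖ ≤ e := by
  have htop : augLagrangian f g l p ≠ ⊤ := ne_top_of_le_ne_top (EReal.coe_ne_top _) hopt
  have hbot : augLagrangian f g l p ≠ ⊥ := ne_bot_of_le_ne_bot (EReal.coe_ne_bot _) (hm p hp)
  have hne : (valueEpigraph f CC).Nonempty :=
    ⟨(p.2, (f p.1).toReal), p.1, hp, EReal.le_coe_toReal (augLagrangian_eq_top_iff.not.1 htop)⟩
  obtain ⟨μ, hμ⟩ := exists_proxObjective_le_neg hconv hne hg hm
  have hgap : ((‖l - g • p.2 - q‖ ^ 2 / (2 * g) : ℝ) : EReal) - augLagrangian f g l p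
      ≤ ((-m : ℝ) : EReal) :=
    calc _ ≤ proxObjective f CC g l q :=
          norm_sq_div_sub_augLagrangian_le_proxObjective hp hg.ne' q
      _ ≤ proxObjective f CC g l μ := hq μ
      _ ≤ ((-m : ℝ) : EReal) := hμ
  lift augLagrangian f g l p to ℝ using ⟨htop, hbot⟩ with v
  norm_cast at hgap hopt
  have hsq : ‖l - g • p.2 - q‖ ^ 2 / (2 * g) ≤ e ^ 2 / (2 * g) := by linarith
  exact (sq_le_sq₀ (norm_nonneg _) he).1 ((div_le_div_iff_of_pos_right (by positivity)).1 hsq)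

theorem statement1_general [CompleteSpace Y] (hconv : Convex ℝ (valueEpigraph f CC))
    (hdom : ∃ p ∈ CC, f p.1 ≠ ⊤) (hg : 0 < g) {e : ℝ} (he : 0 ≤ e) (hp : p ∈ CC)
    (hbot : f p.1 ≠ ⊥)
    (hopt : augLagrangian f g l p
      ≤ (⨅ (p' : E × Y) (_ : p' ∈ CC), augLagrangian f g l p') + ((e ^ 2 / (2 * g) : ℝ) : EReal))
    {l' : Y} (hl' : l' = l - g • p.2) :
    (∀ q, (∀ μ, proxObjective f CC g l q ≤ proxObjective f CC g l μ) → ‖l' - q‖ ≤ e) ∧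
      p.2 = g⁻¹ • (l - l') := by
  subst hl'
  refine ⟨fun q hq => ?_, by rw [sub_sub_cancel, inv_smul_smul₀ hg.ne']⟩
  have hinf : ∀ p' ∈ CC, (⨅ (p' : E × Y) (_ : p' ∈ CC), augLagrangian f g l p')
      ≤ augLagrangian f g l p' := fun p' hp' => iInf₂_le p' hp'
  generalize (⨅ (p' : E × Y) (_ : p' ∈ CC), augLagrangian f g l p') = m at hopt hinf
  have hm_top : m ≠ ⊤ := by
    obtain ⟨p₀, hp₀, hfp₀⟩ := hdom
    exact ne_top_of_le_ne_top (augLagrangian_eq_top_iff.not.2 hfp₀) (hinf p₀ hp₀)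
  have hm_bot : m ≠ ⊥ := by
    rintro rfl
    rw [EReal.bot_add, le_bot_iff, augLagrangian_eq_bot_iff] at hopt
    exact hbot hopt
  lift m to ℝ using ⟨hm_top, hm_bot⟩
  exact norm_sub_smul_sub_le_of_forall_proxObjective_le hconv hg hinf he hp
    (by rwa [EReal.coe_add]) hq

end AugmentedLagrangian

theorem statement1
    {E Y : Type*}
    [NormedAddCommGroup E] [InnerProductSpace ℝ E] [CompleteSpace E]
    [NormedAddCommGroup Y] [InnerProductSpace ℝ Y] [CompleteSpace Y]
    (X : Set E) (hXne : X.Nonempty) (hXcl : IsClosed X) (hXcv : Convex ℝ X)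
    (K : Set Y) (hKne : K.Nonempty) (hKcl : IsClosed K) (hKcv : Convex ℝ K)
    (f : E → EReal)
    (hf_bot : ∀ x : E, f x ≠ ⊥) (hf_top : ∃ x ∈ X, f x ≠ ⊤)
    (hf_dom : ∀ x : E, x ∉ X → f x = ⊤)
    (hf_lsc : LowerSemicontinuous f)
    (hf_cvx : ∀ x y : E, ∀ a b : ℝ, 0 ≤ a → 0 ≤ b → a + b = 1 →
      f (a • x + b • y) ≤ (a : EReal) * f x + (b : EReal) * f y)
    (C : E → Y) (CC : Set (E × Y))
    (hCC : ∀ (x : E) (sv : Y), (x, sv) ∈ CC ↔ x ∈ X ∧ ∃ yv ∈ K, sv = C x - yv)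
    (hCCne : CC.Nonempty) (hCCcl : IsClosed CC) (hCCcv : Convex ℝ CC)
    (hnu_bot : ∀ sv : Y, valueFn f CC sv ≠ ⊥)
    (γ : ℕ → ℝ) (hγ : ∀ k : ℕ, 0 < γ k) (ε : ℕ → ℝ) (hε : ∀ k : ℕ, 0 ≤ ε k)
    (xs : ℕ → E) (ys : ℕ → Y) (ss : ℕ → Y) (lam : ℕ → Y)
    (hxs : ∀ k : ℕ, xs (k+1) ∈ X) (hys : ∀ k : ℕ, ys (k+1) ∈ K)
    (hss : ∀ k : ℕ, ss (k+1) = C (xs (k+1)) - ys (k+1))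
    (hopt : ∀ k : ℕ,
      f (xs (k+1)) - ((⟪lam k, ss (k+1)⟫ : ℝ) : EReal)
          + ((γ k / 2 * ‖ss (k+1)‖ ^ 2 : ℝ) : EReal)
        ≤ (⨅ (p : E × Y) (_ : p ∈ CC),
              f p.1 - ((⟪lam k, p.2⟫ : ℝ) : EReal)
                + ((γ k / 2 * ‖p.2‖ ^ 2 : ℝ) : EReal))
          + ((ε (k+1) ^ 2 / (2 * γ k) : ℝ) : EReal))
    (hlam : ∀ k : ℕ, lam (k+1) = lam k - γ k • ss (k+1))
    :
    ∀ k : ℕ,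
      (∀ q : Y,
          (∀ μ : Y,
              negDual f CC q + ((‖lam k - q‖ ^ 2 / (2 * γ k) : ℝ) : EReal)
                ≤ negDual f CC μ + ((‖lam k - μ‖ ^ 2 / (2 * γ k) : ℝ) : EReal)) →
          ‖lam (k+1) - q‖ ≤ ε (k+1)) ∧
      ss (k+1) = (γ k)⁻¹ • (lam k - lam (k+1)) := by
  obtain ⟨x₀, hx₀, hfx₀⟩ := hf_top
  obtain ⟨y₀, hy₀⟩ := hKne
  have hdom : ∃ p ∈ CC, f p.1 ≠ ⊤ := ⟨(x₀, C x₀ - y₀), (hCC _ _).2 ⟨hx₀, y₀, hy₀, rfl⟩, hfx₀⟩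
  exact fun k => statement1_general (convex_valueEpigraph hf_cvx hCCcv) hdom (hγ k) (hε (k + 1))
    (p := (xs (k + 1), ss (k + 1))) ((hCC _ _).2 ⟨hxs k, _, hys k, hss k⟩) (hf_bot _) (hopt k)
    (hlam k)
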